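/- There exists a continuous quadratic functional P : ℓ₁(𝔠) → ℂ (over the complex field, 𝔠 = 2^{ℵ₀} being the cardinality of the continuum) which has a separable maximal zero subspace and also a maximal zero subspace of density 𝔠. -/

import Mathlib

noncomputable section

/-- The complex Banach space `ℓ₁(Γ)`. -/
abbrev ell1 (Γ : Type*) : Type _ := lp (fun _ : Γ => ℂ) 1

/-- The density character of a topological space: the smallest cardinality of a dense
subset. -/
def densityChar (α : Type u) [TopologicalSpace α] : Cardinal.{u} :=
  sInf {c : Cardinal.{u} | ∃ s : Set α, Dense s ∧ Cardinal.mk s = c}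

/-- `Y` is a maximal zero subspace of `P`: `P` vanishes on `Y`, and `Y` is maximal with
respect to inclusion among the subspaces on which `P` vanishes. -/
def IsMaximalZeroSubspace {X : Type*} [NormedAddCommGroup X] [Module ℂ X]
    (P : X → ℂ) (Y : Submodule ℂ X) : Prop :=
  (∀ y ∈ Y, P y = 0) ∧
  ∀ Z : Submodule ℂ X, (∀ z ∈ Z, P z = 0) → Y ≤ Z → Z = Y

open Classical in
/-- the pairing between the countable part and the large part -/
def cc (j : ℕ × ℤ) (t : ℝ) : ℂ := if ⌊(j.1 : ℝ) * t⌋ = j.2 then 1 else 0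

def KK : (ℕ × ℤ) ⊕ ℝ → (ℕ × ℤ) ⊕ ℝ → ℂ
  | Sum.inl j, Sum.inr t => cc j t
  | Sum.inr t, Sum.inl j => cc j t
  | _, _ => 0

lemma norm_cc_le (j : ℕ × ℤ) (t : ℝ) : ‖cc j t‖ ≤ 1 := by
  unfold cc; split_ifs <;> simp

lemma KK_symm (a b) : KK a b = KK b a := by
  rcases a with a | a <;> rcases b with b | b <;> rfl

lemma norm_KK_le (a b) : ‖KK a b‖ ≤ 1 := by
  rcases a with a | a <;> rcases b with b | b <;> simp [KK, norm_cc_le]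

lemma ell1_summable {Γ : Type} (x : ell1 Γ) : Summable (fun γ => ‖x γ‖) := by
  have := (lp.memℓp x).summable (by simp)
  simpa using this

lemma ell1_norm {Γ : Type} (x : ell1 Γ) : ‖x‖ = ∑' γ, ‖x γ‖ := by
  have := lp.norm_eq_tsum_rpow (p := 1) (by simp) x
  simpa using this

section form
variable {Γ : Type} (k : Γ → Γ → ℂ) (hk : ∀ a b, ‖k a b‖ ≤ 1)

lemma prod_summable_norm (x y : ell1 Γ) :
    Summable (fun p : Γ × Γ => ‖x p.1‖ * ‖y p.2‖) :=
  Summable.mul_of_nonneg (ell1_summable x) (ell1_summable y) (fun _ => norm_nonneg _)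
    (fun _ => norm_nonneg _)

include hk in
lemma term_le (x y : ell1 Γ) (p : Γ × Γ) :
    ‖k p.1 p.2 * (x p.1 * y p.2)‖ ≤ ‖x p.1‖ * ‖y p.2‖ := by
  rw [norm_mul, norm_mul]
  exact mul_le_of_le_one_left (by positivity) (hk _ _)

include hk in
lemma term_summable (x y : ell1 Γ) :
    Summable (fun p : Γ × Γ => k p.1 p.2 * (x p.1 * y p.2)) :=
  Summable.of_norm_bounded (prod_summable_norm x y) (term_le k hk x y)

def formB : ell1 Γ →L[ℂ] ell1 Γ →L[ℂ] ℂ :=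
  LinearMap.mkContinuous₂
    (LinearMap.mk₂ ℂ (fun x y : ell1 Γ => ∑' p : Γ × Γ, k p.1 p.2 * (x p.1 * y p.2))
      (by
        intro x x' y
        rw [← (term_summable k hk x y).tsum_add (term_summable k hk x' y)]
        congr 1; ext p; simp; ring)
      (by
        intro c x y
        rw [smul_eq_mul, ← tsum_mul_left]
        congr 1; ext p; simp; ring)
      (by
        intro x y y'
        rw [← (term_summable k hk x y).tsum_add (term_summable k hk x y')]
        congr 1; ext p; simp; ring)
      (by
        intro c x y
        rw [smul_eq_mul, ← tsum_mul_left]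
        congr 1; ext p; simp; ring)) 1
    (by
      intro x y
      rw [LinearMap.mk₂_apply, one_mul, ell1_norm x, ell1_norm y,
        (ell1_summable x).tsum_mul_tsum (ell1_summable y) (prod_summable_norm x y)]
      exact tsum_of_norm_bounded (prod_summable_norm x y).hasSum (term_le k hk x y))

lemma formB_apply (x y : ell1 Γ) :
    formB k hk x y = ∑' p : Γ × Γ, k p.1 p.2 * (x p.1 * y p.2) := rfl

lemma formB_symm (hs : ∀ a b, k a b = k b a) (x y : ell1 Γ) :
    formB k hk x y = formB k hk y x := by
  rw [formB_apply, formB_apply, ← (Equiv.prodComm Γ Γ).tsum_eq]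
  congr 1; ext p
  simp [hs p.2 p.1, mul_comm]

open Classical in
lemma formB_single (x : ell1 Γ) (d : Γ) :
    formB k hk x (lp.single 1 d (1 : ℂ)) = ∑' g, k g d * x g := by
  rw [formB_apply, (term_summable k hk x _).tsum_prod]
  congr 1; ext g
  rw [tsum_eq_single d]
  · simp
  · intro d' hd
    simp [lp.single_apply, Pi.single_apply, hd]

open Classical in
lemma ell1_hasSum (x : ell1 Γ) : HasSum (fun g => x g • lp.single 1 g (1 : ℂ) : Γ → ell1 Γ) x := by
  have h := lp.hasSum_single (p := 1) (by simp) x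
  convert h using 2 with g
  rw [← lp.single_smul]; simp

open Classical in
lemma formB_zero (x y : ell1 Γ)
    (h : ∀ d, y d = 0 ∨ formB k hk x (lp.single 1 d (1 : ℂ)) = 0) : formB k hk x y = 0 := by
  have h1 := (ell1_hasSum y).mapL (formB k hk x)
  have h2 : (fun g => formB k hk x (y g • lp.single 1 g (1 : ℂ))) = fun _ => 0 := by
    ext g
    rcases h g with h | h <;> simp [h]
  rw [h2] at h1
  exact h1.unique hasSum_zero

end form

lemma cc_inj {Γ : Type} (e : Γ ≃ (ℕ × ℤ) ⊕ ℝ) (z : ell1 Γ)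
    (h : ∀ j, ∑' g, KK (e g) (Sum.inl j) * z g = 0) (t : ℝ) : z (e.symm (Sum.inr t)) = 0 := by
  classical
  have key : Filter.Tendsto
      (fun n : ℕ => ∑' g, KK (e g) (Sum.inl (n, ⌊(n : ℝ) * t⌋)) * z g) Filter.atTop
      (nhds (∑' g, if g = e.symm (Sum.inr t) then z g else 0)) := by
    refine tendsto_tsum_of_dominated_convergence (ell1_summable z) ?_ ?_
    · intro g
      rcases hg : e g with j | s
      · have : g ≠ e.symm (Sum.inr t) := by rintro rfl; simp at hg
        simp [KK, this]
      · by_cases hst : s = t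
        · have : g = e.symm (Sum.inr t) := by rw [← hst, ← hg]; simp
          simp only [KK, cc, hst, if_pos this]
          simp
        · have : g ≠ e.symm (Sum.inr t) := by
            rintro rfl; simp at hg; exact hst hg.symm
          rw [if_neg this]
          refine tendsto_const_nhds.congr' ?_
          obtain ⟨N, hN⟩ := exists_nat_gt (1 / |s - t|)
          have hp : 0 < |s - t| := abs_pos.2 (sub_ne_zero.2 hst)
          filter_upwards [Filter.eventually_ge_atTop N] with n hn
          have : ⌊(n : ℝ) * s⌋ ≠ ⌊(n : ℝ) * t⌋ := by
            intro heq
            have h1 := Int.abs_sub_lt_one_of_floor_eq_floor heq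
            rw [← mul_sub, abs_mul, Nat.abs_cast] at h1
            rw [div_lt_iff₀ hp] at hN
            have : (N : ℝ) ≤ n := by exact_mod_cast hn
            nlinarith
          simp [KK, cc, this]
    · refine Filter.Eventually.of_forall fun n g => ?_
      rw [norm_mul]
      exact mul_le_of_le_one_left (norm_nonneg _) (norm_KK_le _ _)
  simp only [h] at key
  rw [tsum_ite_eq] at key
  exact (tendsto_nhds_unique key tendsto_const_nhds)

lemma exists_max {X : Type} [NormedAddCommGroup X] [Module ℂ X] (P : X → ℂ)
    (W : Submodule ℂ X) (hW : ∀ w ∈ W, P w = 0) :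
    ∃ Y, W ≤ Y ∧ IsMaximalZeroSubspace P Y := by
  obtain ⟨m, hm, hmax⟩ := zorn_le_nonempty₀ {Z : Submodule ℂ X | ∀ z ∈ Z, P z = 0} (by
    intro c hc hchain y hy
    refine ⟨sSup c, ?_, fun z hz => le_sSup hz⟩
    intro z hz
    obtain ⟨Z, hZ, hzZ⟩ := (Submodule.mem_sSup_of_directed ⟨y, hy⟩ hchain.directedOn).1 hz
    exact hc hZ z hzZ) W hW
  exact ⟨m, hm, hmax.prop, fun Z hZ hle => le_antisymm (hmax.le_of_ge hZ hle) hle⟩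

lemma mk_ell1_le {Γ : Type} (hΓ : Cardinal.mk Γ = Cardinal.continuum) :
    Cardinal.mk (ell1 Γ) ≤ Cardinal.continuum := by
  classical
  have : Nonempty Γ := by
    rw [← Cardinal.mk_ne_zero_iff, hΓ]; exact Cardinal.continuum_ne_zero
  let F : (ℕ → Γ × ℂ) → (Γ → ℂ) := fun s g =>
    if h : ∃ n, (s n).1 = g then (s h.choose).2 else 0
  have hF : ∀ x : ell1 Γ, ∃ s, F s = x := by
    intro x
    have hc : (Function.support fun g => ‖x g‖).Countable := (ell1_summable x).countable_support
    obtain ⟨f, hf⟩ := (hc.insert (Classical.arbitrary Γ)).exists_eq_range (Set.insert_nonempty _ _)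
    refine ⟨fun n => (f n, x (f n)), ?_⟩
    ext g
    simp only [F]
    split_ifs with h
    · exact congrArg _ h.choose_spec
    · by_contra hne
      have : g ∈ Set.range f := by
        rw [← hf]; right; simp; exact fun h => hne h.symm
      exact h this
  choose s hs using hF
  have hinj : Function.Injective s := by
    intro x y hxy
    apply lp.ext
    rw [← hs x, ← hs y, hxy]
  refine (Cardinal.mk_le_of_injective hinj).trans ?_
  simp [hΓ, Cardinal.mk_complex]

/-- There is a continuous quadratic functional on `ℓ₁(𝔠)` (i.e., `x ↦ B x x` for a continuous
symmetric bilinear form `B` on `ℓ₁` over an index set of cardinality continuum) having a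
separable maximal zero subspace and also a maximal zero subspace of density `𝔠`. -/
theorem exists_quadratic_with_separable_and_large_maximal_zero_subspaces
    (Γ : Type) (hΓ : Cardinal.mk Γ = Cardinal.continuum) :
    ∃ B : ell1 Γ →L[ℂ] ell1 Γ →L[ℂ] ℂ,
      (∀ x y : ell1 Γ, B x y = B y x) ∧
      ∃ Y₁ Y₂ : Submodule ℂ (ell1 Γ),
        IsMaximalZeroSubspace (fun x => B x x) Y₁ ∧
        TopologicalSpace.IsSeparable (Y₁ : Set (ell1 Γ)) ∧
        IsMaximalZeroSubspace (fun x => B x x) Y₂ ∧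
        densityChar ↥Y₂ = Cardinal.continuum := by
  classical
  have hcard : Cardinal.mk Γ = Cardinal.mk ((ℕ × ℤ) ⊕ ℝ) := by
    rw [hΓ]; simp [Cardinal.mk_real]
  obtain ⟨e⟩ := Cardinal.eq.1 hcard
  let k : Γ → Γ → ℂ := fun a b => KK (e a) (e b)
  have hk : ∀ a b, ‖k a b‖ ≤ 1 := fun a b => norm_KK_le _ _
  have hs : ∀ a b, k a b = k b a := fun a b => KK_symm _ _
  have hsymm := formB_symm k hk hs
  let S (A : Set Γ) : Submodule ℂ (ell1 Γ) :=
    { carrier := {x | ∀ g, g ∉ A → x g = 0}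
      add_mem' := by
        intro x y hx hy g hg
        simp [hx g hg, hy g hg]
      zero_mem' := by intro g _; simp
      smul_mem' := by
        intro c x hx g hg
        simp [hx g hg] }
  have hSsingle : ∀ A : Set Γ, ∀ g ∈ A, (lp.single 1 g (1 : ℂ) : ell1 Γ) ∈ S A := by
    intro A g hg g' hg'
    have : g' ≠ g := by rintro rfl; exact hg' hg
    simp [lp.single_apply, Pi.single_apply, this]
  have hSzero : ∀ A : Set Γ, (∀ a ∈ A, ∀ b ∈ A, k a b = 0) →
      ∀ x ∈ S A, formB k hk x x = 0 := by
    intro A hA x hx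
    apply formB_zero
    intro d
    by_cases hd : d ∈ A
    · right
      rw [formB_single]
      convert tsum_zero with g
      by_cases hg : g ∈ A
      · simp [hA g hg d hd]
      · simp [hx g hg]
    · exact Or.inl (hx d hd)
  let A₁ : Set Γ := Set.range fun j => e.symm (Sum.inl j)
  let A₂ : Set Γ := Set.range fun t => e.symm (Sum.inr t)
  obtain ⟨Y₂, hY₂, hmax⟩ := exists_max (fun x => formB k hk x x) (S A₂) (hSzero A₂ (by
    rintro _ ⟨a, rfl⟩ _ ⟨b, rfl⟩; simp [k, KK]))
  refine ⟨formB k hk, hsymm, S A₁, Y₂, ⟨hSzero A₁ ?_, ?_⟩, ?_, hmax, ?_⟩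
  · rintro _ ⟨a, rfl⟩ _ ⟨b, rfl⟩; simp [k, KK]
  · intro Z hZ hle
    refine le_antisymm ?_ hle
    intro z hz g hg
    rcases hg' : e g with j | t
    · exact absurd ⟨j, by simp [← hg']⟩ hg
    have hg2 : g = e.symm (Sum.inr t) := by simp [← hg']
    rw [hg2]
    refine cc_inj e z ?_ t
    intro j
    have hm := hle (hSsingle A₁ (e.symm (Sum.inl j)) ⟨j, rfl⟩)
    have h1 := hZ _ (Z.add_mem hz hm)
    have h2 := hZ _ hz
    have h3 := hZ _ hm
    simp only [map_add, ContinuousLinearMap.add_apply] at h1 h2 h3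
    rw [h2, h3, hsymm (lp.single 1 (e.symm (Sum.inl j)) (1 : ℂ)) z] at h1
    have h4 : formB k hk z (lp.single 1 (e.symm (Sum.inl j)) (1 : ℂ)) = 0 := by
      have : (2 : ℂ) * formB k hk z (lp.single 1 (e.symm (Sum.inl j)) (1 : ℂ)) = 0 := by
        rw [← h1]; ring
      simpa using this
    rw [formB_single] at h4
    simpa [k] using h4
  · let D : Set (ell1 Γ) := Set.range fun j => lp.single 1 (e.symm (Sum.inl j)) (1 : ℂ)
    have hD : TopologicalSpace.IsSeparable D := (Set.countable_range _).isSeparable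
    refine (hD.span (R := ℂ)).closure.mono ?_
    intro x hx
    refine mem_closure_of_tendsto (ell1_hasSum x) (Filter.Eventually.of_forall fun s => ?_)
    refine Submodule.sum_mem _ fun g _ => ?_
    by_cases hg : g ∈ A₁
    · obtain ⟨j, rfl⟩ := hg
      exact Submodule.smul_mem _ _ (Submodule.subset_span ⟨j, rfl⟩)
    · rw [hx g hg, zero_smul]; exact Submodule.zero_mem _
  · apply le_antisymm
    · have h0 : densityChar ↥Y₂ ≤ Cardinal.mk (Set.univ : Set ↥Y₂) :=
        csInf_le' ⟨Set.univ, dense_univ, rfl⟩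
      refine h0.trans ?_
      rw [Cardinal.mk_univ]
      exact (Cardinal.mk_subtype_le _).trans (mk_ell1_le hΓ)
    · refine le_csInf ⟨_, Set.univ, dense_univ, rfl⟩ ?_
      rintro _ ⟨s, hsd, rfl⟩
      let E : ℝ → Y₂ := fun t =>
        ⟨lp.single 1 (e.symm (Sum.inr t)) (1 : ℂ), hY₂ (hSsingle A₂ _ ⟨t, rfl⟩)⟩
      have hex : ∀ t, ∃ y : s, dist (E t) y < 1 / 2 := by
        intro t
        obtain ⟨y, hy, h⟩ := hsd.exists_dist_lt (E t) (by norm_num : (0 : ℝ) < 1 / 2)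
        exact ⟨⟨y, hy⟩, h⟩
      choose f hf using hex
      rw [← Cardinal.mk_real]
      refine Cardinal.mk_le_of_injective (f := f) ?_
      intro t t' htt
      by_contra hne
      have h1 := hf t
      have h2 := hf t'
      rw [← htt] at h2
      have h3 : dist (E t) (E t') < 1 := by
        have := dist_triangle_right (E t) (E t') (f t)
        linarith
      rw [Subtype.dist_eq, dist_eq_norm] at h3
      have h4 := lp.norm_apply_le_norm (p := 1) (by simp)
        ((E t : ell1 Γ) - (E t' : ell1 Γ)) (e.symm (Sum.inr t))
      have h5 : ((E t : ell1 Γ) - (E t' : ell1 Γ)) (e.symm (Sum.inr t)) = 1 := by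
        simp [E, lp.single_apply, Pi.single_apply, hne]
      rw [h5, norm_one] at h4
      linarith

end
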